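/- Let d ≥ 2 be an integer, let α be a complex root of the monic polynomial (x − 2)(x − 4)···(x − 2^d) − 1 = ∏_{i=1}^d (x − 2^i) − 1, and let K = ℚ(α). Then α − 2^i is a unit of O_K for every i = 1, …, d; consequently 2^j − 2^i ∈ N_K for all 1 ≤ i < j ≤ d, and |N_K| ≥ d(d−1)/2. -/

import Mathlib

/-!
The root `α` is an algebraic integer, because the polynomial it satisfies is monic with integer
coefficients (`isIntegral_of_prod_sub_eq_one`). The equation `∏ (α - 2 ^ i) = 1` then holds in `𝓞 K`,
so each factor divides `1` and is a unit. The identity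
`2 ^ j - 2 ^ i = (α - 2 ^ i) + -(α - 2 ^ j)` writes the differences as sums of two units.
Since `2 ^ (j - 1) ≤ 2 ^ j - 2 ^ i < 2 ^ j` for `i < j`, the difference determines first `j` and
then `i` (`two_pow_sub_inj`), so the `d (d - 1) / 2` pairs give distinct elements of `NK K`.
-/

theorem isIntegral_of_prod_sub_eq_one {K : Type*} [Field K] (d : ℕ) (hd : 2 ≤ d) (α : K)
    (h : ∏ i ∈ Finset.Icc 1 d, (α - 2 ^ i) = 1) : IsIntegral ℤ α := by
  let p : Polynomial ℤ := ∏ i ∈ Finset.Icc 1 d, (Polynomial.X - Polynomial.C ((2 : ℤ) ^ i))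
  have hp : p.Monic := Polynomial.monic_prod_X_sub_C _ _
  have hdeg : p.natDegree = d := by
    simp only [p]
    rw [Polynomial.natDegree_finsetProd_X_sub_C_eq_card]
    simp
  refine ⟨p - 1, hp.sub_of_left ?_, ?_⟩
  · rw [Polynomial.degree_one]
    exact Polynomial.natDegree_pos_iff_degree_pos.mp (by omega)
  · simp [p, Polynomial.eval₂_finsetProd, Polynomial.eval₂_pow, Polynomial.eval₂_ofNat, h]

/-- The larger exponent is determined because `2 ^ j - 2 ^ i` lies in `[2 ^ (j - 1), 2 ^ j)`. -/
theorem two_pow_sub_le {i j i' j' : ℕ} (hij : i < j) (hij' : i' < j')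
    (h : 2 ^ j - 2 ^ i = 2 ^ j' - 2 ^ i') : j' ≤ j := by
  by_contra! hlt
  obtain ⟨m, rfl⟩ : ∃ m, j' = m + 1 := ⟨j' - 1, by omega⟩
  have h1 : 2 ^ j ≤ 2 ^ m := Nat.pow_le_pow_right two_pos (by omega)
  have h2 : 2 ^ i' ≤ 2 ^ m := Nat.pow_le_pow_right two_pos (by omega)
  have h3 : 2 ^ i < 2 ^ j := Nat.pow_lt_pow_right one_lt_two hij
  have h4 : 0 < 2 ^ i := by positivity
  rw [pow_succ] at h
  omega

theorem two_pow_sub_inj {i j i' j' : ℕ} (hij : i < j) (hij' : i' < j')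
    (h : 2 ^ j - 2 ^ i = 2 ^ j' - 2 ^ i') : j = j' ∧ i = i' := by
  obtain rfl : j = j' := le_antisymm (two_pow_sub_le hij' hij h.symm) (two_pow_sub_le hij hij' h)
  have h3 : 2 ^ i < 2 ^ j := Nat.pow_lt_pow_right one_lt_two hij
  have h4 : 2 ^ i' < 2 ^ j := Nat.pow_lt_pow_right one_lt_two hij'
  exact ⟨rfl, Nat.pow_right_injective le_rfl (by simp only; omega)⟩


open NumberField

/-- `NK K` is the set of positive integers `n` that can be written as a sum of
two units of the ring of integers of `K`. -/
def NK (K : Type*) [Field K] [NumberField K] : Set ℕ :=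
  {n | 0 < n ∧ ∃ ε δ : (𝓞 K)ˣ, (ε : 𝓞 K) + (δ : 𝓞 K) = (n : 𝓞 K)}

/-- Let `d ≥ 2`, let `α` be a root of
`(x − 2)(x − 4)⋯(x − 2^d) − 1` and `K = ℚ(α)`. Then each `α − 2^i` is a unit of
`𝓞 K` for `1 ≤ i ≤ d`; consequently `2^j − 2^i ∈ N_K` for all `1 ≤ i < j ≤ d`,
and `|N_K| ≥ d(d−1)/2`. -/
theorem sums_of_units_stmt_19 (d : ℕ) (hd : 2 ≤ d)
    (K : Type*) [Field K] [NumberField K]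
    (α : K) (hα : (∏ i ∈ Finset.Icc 1 d, (α - 2 ^ i)) - 1 = 0)
    (hgen : IntermediateField.adjoin ℚ {α} = ⊤) :
    (∀ i : ℕ, 1 ≤ i → i ≤ d → ∃ u : (𝓞 K)ˣ, ((u : 𝓞 K) : K) = α - 2 ^ i) ∧
    (∀ i j : ℕ, 1 ≤ i → i < j → j ≤ d → 2 ^ j - 2 ^ i ∈ NK K) ∧
    ((d * (d - 1) / 2 : ℕ) : Cardinal) ≤ Cardinal.mk (NK K) := by
  have hprod : ∏ i ∈ Finset.Icc 1 d, (α - 2 ^ i) = 1 := sub_eq_zero.mp hα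
  obtain ⟨a, rfl⟩ : ∃ a : 𝓞 K, (a : K) = α :=
    ⟨⟨α, isIntegral_of_prod_sub_eq_one d hd α hprod⟩, rfl⟩
  have htwo : algebraMap (𝓞 K) K 2 = 2 := map_ofNat _ 2
  have hprod' : ∏ i ∈ Finset.Icc 1 d, (a - 2 ^ i) = 1 := by
    apply RingOfIntegers.ext
    simpa [map_prod, htwo] using hprod
  have hunit : ∀ i : ℕ, 1 ≤ i → i ≤ d → IsUnit (a - 2 ^ i) := fun i h1 h2 =>
    isUnit_of_dvd_one (hprod' ▸ Finset.dvd_prod_of_mem _ (Finset.mem_Icc.mpr ⟨h1, h2⟩))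
  have hmem : ∀ i j : ℕ, 1 ≤ i → i < j → j ≤ d → 2 ^ j - 2 ^ i ∈ NK K := by
    intro i j hi hij hj
    obtain ⟨u, hu⟩ := hunit i hi (by omega)
    obtain ⟨v, hv⟩ := hunit j (by omega) hj
    have hlt : 2 ^ i < 2 ^ j := Nat.pow_lt_pow_right one_lt_two hij
    refine ⟨Nat.sub_pos_of_lt hlt, u, -v, ?_⟩
    rw [Units.val_neg, hu, hv, Nat.cast_sub hlt.le]
    push_cast
    ring
  refine ⟨fun i h1 h2 => ?_, hmem, ?_⟩
  · obtain ⟨u, hu⟩ := hunit i h1 h2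
    exact ⟨u, by simp [hu, htwo]⟩
  · -- The pairs `i < j` in `[1, d]` are indexed, shifted by one, by `j < d` and `i < j`.
    let s : Finset (Σ _ : ℕ, ℕ) := (Finset.range d).sigma fun j => Finset.range j
    have hs : s.card = d * (d - 1) / 2 := by
      simp [s, Finset.card_sigma, Finset.sum_range_id]
    let f : (Σ _ : ℕ, ℕ) → ℕ := fun p => 2 ^ (p.1 + 1) - 2 ^ (p.2 + 1)
    have hinj : Set.InjOn f s := by
      rintro ⟨j, i⟩ hp ⟨j', i'⟩ hp' h
      simp only [s, Finset.coe_sigma, Set.mem_sigma_iff, Finset.mem_coe, Finset.mem_range] at hp hp'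
      obtain ⟨h1, h2⟩ := two_pow_sub_inj (Nat.succ_lt_succ hp.2) (Nat.succ_lt_succ hp'.2) h
      obtain rfl : j = j' := Nat.succ_injective h1
      obtain rfl : i = i' := Nat.succ_injective h2
      rfl
    have hsub : ((s.image f : Finset ℕ) : Set ℕ) ⊆ NK K := by
      intro n hn
      obtain ⟨⟨j, i⟩, hp, rfl⟩ := Finset.mem_image.mp (Finset.mem_coe.mp hn)
      simp only [s, Finset.mem_sigma, Finset.mem_range] at hp
      exact hmem (i + 1) (j + 1) (by omega) (by omega) (by omega)
    rw [← hs, ← Finset.card_image_of_injOn hinj, ← Cardinal.mk_coe_finset]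
    exact Cardinal.mk_le_mk_of_subset hsub
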